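/- arXiv:2112.03175 — 5 statements merged into one kernel-verified Lean document; each statement's English description precedes it below -/
import Mathlib

section
/- Let p, q, n, k be positive integers. Suppose there exist an S-template A₁, …, A_{n+1} with width q and n+1 colors whose special subset is A_{n+1}, and a partition of {1, …, p} into k sum-free subsets. Let m denote the smallest element of A_{n+1}. Then there exists a partition of {1, …, pq + m − 1} into n + k sum-free subsets. -/
/-!
Write each `N ≥ 1` as `N = q * a + r` with `1 ≤ r ≤ q`, and call `r` its residue and `a + 1` its row.
A number whose residue lies in a non-special `A i` gets color `i`; a number whose residue is special
gets the color that `B` assigns to its row. The numbers `p * q + 1, …, p * q + m - 1` have residue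
less than `m`, hence a non-special one, so `B` is only consulted on rows `1, …, p`.

When two numbers are added, either their residues add up to at most `q`, and the residue of the sum is
the sum of the residues, or a carry occurs: `q` is subtracted from the sum of the residues, and the row
of the sum is exactly the sum of the rows (`residue_row_add`). Without a carry, sum-freeness of `A i`
suffices for every color. With a carry, a non-special color uses the wrap-around condition of the
template, and a special number uses sum-freeness of the `B j`.
-/

/-- A set of natural numbers is sum-free: for all `a b ∈ A` (not necessarily
distinct), `a + b ∉ A`. -/
def SumFree (A : Set ℕ) : Prop := ∀ a ∈ A, ∀ b ∈ A, a + b ∉ A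

/-- A set of natural numbers is weakly sum-free: for all `a b ∈ A` with
`a ≠ b`, `a + b ∉ A`. -/
def WeaklySumFree (A : Set ℕ) : Prop := ∀ a ∈ A, ∀ b ∈ A, a ≠ b → a + b ∉ A

/-- `A 0, …, A (n-1)` is a partition of `{1, …, p}`. -/
def IsPartition {n : ℕ} (p : ℕ) (A : Fin n → Set ℕ) : Prop :=
  (∀ i j, i ≠ j → Disjoint (A i) (A j)) ∧ (⋃ i, A i) = Set.Icc 1 p

/-- An S-template with width `q` and `n` colors: a partition of `{1, …, q}`
into `n` sum-free subsets such that every subset except the last (special)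
one satisfies: if `x, y` belong to it and `x + y > q`, then `x + y - q` does
not belong to it. -/
def IsSTemplate {n : ℕ} (q : ℕ) (A : Fin n → Set ℕ) : Prop :=
  IsPartition q A ∧ (∀ i, SumFree (A i)) ∧
  ∀ i : Fin n, (i : ℕ) + 1 ≠ n →
    ∀ x ∈ A i, ∀ y ∈ A i, q < x + y → x + y - q ∉ A i

/-- The representative of `N ≥ 1` modulo `q` in `{1, …, q}`. For `N = 0` the value is `1`. -/
def residue (q N : ℕ) : ℕ := (N - 1) % q + 1

/-- The index, starting from `1`, of the block of length `q` that contains `N ≥ 1`. -/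
def row (q N : ℕ) : ℕ := (N - 1) / q + 1

theorem residue_le {q : ℕ} (hq : 0 < q) (N : ℕ) : residue q N ≤ q := Nat.mod_lt _ hq

theorem exists_eq_mul_add_residue {q N : ℕ} (hN : 1 ≤ N) :
    ∃ a, row q N = a + 1 ∧ N = q * a + residue q N := by
  refine ⟨(N - 1) / q, rfl, ?_⟩
  have := Nat.div_add_mod (N - 1) q
  unfold residue
  omega

theorem residue_mul_add {q r : ℕ} (a : ℕ) (h1 : 1 ≤ r) (hr : r ≤ q) :
    residue q (q * a + r) = r := by
  unfold residue
  rw [Nat.add_sub_assoc h1, Nat.mul_add_mod, Nat.mod_eq_of_lt (by omega)]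
  omega

theorem row_mul_add {q r : ℕ} (a : ℕ) (h1 : 1 ≤ r) (hr : r ≤ q) :
    row q (q * a + r) = a + 1 := by
  unfold row
  rw [Nat.add_sub_assoc h1, Nat.mul_add_div (by omega), Nat.div_eq_of_lt (by omega)]

/-- Addition in terms of residues and rows. Rows start from `1`, so they are additive precisely
when there is a carry. -/
theorem residue_row_add {q x y : ℕ} (hq : 0 < q) (hx : 1 ≤ x) (hy : 1 ≤ y) :
    residue q (x + y) = residue q x + residue q y ∨
    (q < residue q x + residue q y ∧
      residue q (x + y) = residue q x + residue q y - q ∧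
      row q (x + y) = row q x + row q y) := by
  obtain ⟨a, ha, hxa⟩ := exists_eq_mul_add_residue (q := q) hx
  obtain ⟨b, hb, hyb⟩ := exists_eq_mul_add_residue (q := q) hy
  have hrx := residue_le hq x
  have hry := residue_le hq y
  have hrx1 : 1 ≤ residue q x := Nat.le_add_left _ _
  rcases le_or_gt (residue q x + residue q y) q with h | h
  · left
    have e : x + y = q * (a + b) + (residue q x + residue q y) := by
      rw [mul_add]; omega
    rw [e, residue_mul_add _ (by omega) h]
  · right
    have e : x + y = q * (a + b + 1) + (residue q x + residue q y - q) := by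
      rw [mul_add, mul_add, mul_one]; omega
    refine ⟨h, ?_, ?_⟩
    · rw [e, residue_mul_add _ (by omega) (by omega)]
    · rw [e, row_mul_add _ (by omega) (by omega)]
      omega

/-- Theorem 2.3: extending an S-template with `n+1` colors (special subset
the last one, smallest element of the special subset `m`) by a sum-free
`k`-partition of `{1, …, p}` yields a sum-free `(n+k)`-partition of
`{1, …, p*q + m - 1}`. -/
theorem stemplate_extension (p q n k : ℕ) (hp : 0 < p) (hq : 0 < q)
    (hn : 0 < n) (hk : 0 < k)
    (A : Fin (n + 1) → Set ℕ) (hA : IsSTemplate q A)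
    (B : Fin k → Set ℕ) (hB : IsPartition p B) (hBsf : ∀ i, SumFree (B i))
    (m : ℕ) (hm : m ∈ A (Fin.last n)) (hmin : ∀ x ∈ A (Fin.last n), m ≤ x) :
    ∃ C : Fin (n + k) → Set ℕ,
      IsPartition (p * q + m - 1) C ∧ ∀ i, SumFree (C i) := by
  obtain ⟨⟨hAd, hAu⟩, hAsf, hAw⟩ := hA
  obtain ⟨hBd, hBu⟩ := hB
  have hmq : m ∈ Set.Icc 1 q := hAu ▸ Set.mem_iUnion_of_mem _ hm
  have hAne : ∀ {i j : Fin (n + 1)} {x : ℕ}, x ∈ A i → x ∈ A j → i = j := fun {i j x} hi hj => by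
    by_contra h
    exact Set.disjoint_left.1 (hAd i j h) hi hj
  have hBne : ∀ {i j : Fin k} {x : ℕ}, x ∈ B i → x ∈ B j → i = j := fun {i j x} hi hj => by
    by_contra h
    exact Set.disjoint_left.1 (hBd i j h) hi hj
  refine ⟨fun c => {N | N ∈ Set.Icc 1 (p * q + m - 1) ∧
    Fin.addCases (motive := fun _ => Prop) (fun i : Fin n => residue q N ∈ A i.castSucc)
      (fun j : Fin k => residue q N ∈ A (Fin.last n) ∧ row q N ∈ B j) c}, ⟨?_, ?_⟩, ?_⟩
  · intro c d hcd
    refine Set.disjoint_left.2 fun N hc hd => hcd ?_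
    replace hc := hc.2
    replace hd := hd.2
    induction c using Fin.addCases with
    | left i =>
      induction d using Fin.addCases with
      | left j =>
        simp only [Fin.addCases_left] at hc hd
        rw [Fin.castSucc_injective n (hAne hc hd)]
      | right j =>
        simp only [Fin.addCases_left, Fin.addCases_right] at hc hd
        exact absurd (hAne hc hd.1) (Fin.castSucc_ne_last i)
    | right i =>
      induction d using Fin.addCases with
      | left j =>
        simp only [Fin.addCases_left, Fin.addCases_right] at hc hd
        exact absurd (hAne hd hc.1) (Fin.castSucc_ne_last j)
      | right j =>
        simp only [Fin.addCases_right] at hc hd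
        rw [hBne hc.2 hd.2]
  · refine Set.Subset.antisymm (Set.iUnion_subset fun c N hN => hN.1) fun N hN => ?_
    have hr : residue q N ∈ ⋃ i, A i := by
      rw [hAu]
      exact ⟨Nat.le_add_left _ _, residue_le hq N⟩
    obtain ⟨i, hi⟩ := Set.mem_iUnion.1 hr
    induction i using Fin.lastCases with
    | cast i =>
      refine Set.mem_iUnion.2 ⟨Fin.castAdd k i, hN, ?_⟩
      simpa only [Fin.addCases_left] using hi
    | last =>
      have hrow : row q N ∈ ⋃ j, B j := by
        rw [hBu]
        obtain ⟨a, ha, hNa⟩ := exists_eq_mul_add_residue (q := q) hN.1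
        have hmr := hmin _ hi
        refine ⟨Nat.le_add_left _ _, ?_⟩
        rw [ha]
        -- A special residue is at least `m`, so a row beyond `p` would force `N ≥ p * q + m`.
        by_contra hlt
        have h1 : q * p ≤ q * a := Nat.mul_le_mul_left q (by omega)
        have h2 := hN.2
        have h3 := hmq.1
        rw [mul_comm p q] at h2
        omega
      obtain ⟨j, hj⟩ := Set.mem_iUnion.1 hrow
      refine Set.mem_iUnion.2 ⟨Fin.natAdd n j, hN, ?_⟩
      simpa only [Fin.addCases_right] using ⟨hi, hj⟩
  · rintro c x ⟨hx, hxc⟩ y ⟨hy, hyc⟩ ⟨-, hs⟩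
    have hadd := residue_row_add hq hx.1 hy.1
    induction c using Fin.addCases with
    | left i =>
      simp only [Fin.addCases_left] at hxc hyc hs
      rcases hadd with h | ⟨hlt, h, -⟩
      · exact hAsf _ _ hxc _ hyc (h ▸ hs)
      · have hi : (i.castSucc : ℕ) + 1 ≠ n + 1 := by
          have := i.isLt
          simp only [Fin.val_castSucc]
          omega
        exact hAw _ hi _ hxc _ hyc hlt (h ▸ hs)
    | right j =>
      simp only [Fin.addCases_right] at hxc hyc hs
      rcases hadd with h | ⟨-, -, h⟩
      · exact hAsf _ _ hxc.1 _ hyc.1 (h ▸ hs.1)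
      · exact hBsf _ _ hxc.2 _ hyc.2 (h ▸ hs.2)
end

section
/- Let n ≥ 2 and p be positive integers. If there exists a partition of {1, …, p} into n − 1 sum-free subsets, then there exists an S-template with width 2p + 1 and n colors. -/
/-- Proposition 2.2 (lower bound): a sum-free `(n-1)`-partition of
`{1, …, p}` gives an S-template with width `2p + 1` and `n` colors, i.e.
`2 S(n-1) + 1 ≤ S⁺(n)`. -/
theorem stemplate_of_schur_partition (n p : ℕ) (hn : 2 ≤ n) (hp : 0 < p)
    (B : Fin (n - 1) → Set ℕ) (hB : IsPartition p B)
    (hBsf : ∀ i, SumFree (B i)) :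
    ∃ A : Fin n → Set ℕ, IsSTemplate (2 * p + 1) A := by
  obtain ⟨hdis, hun⟩ := hB
  have hle : ∀ i, ∀ x ∈ B i, 1 ≤ x ∧ x ≤ p := fun i x hx =>
    Set.mem_Icc.mp (hun ▸ Set.mem_iUnion_of_mem i hx)
  refine ⟨fun i => if h : (i : ℕ) < n - 1 then B ⟨i, h⟩ else Set.Icc (p + 1) (2 * p + 1),
    ⟨?_, ?_⟩, ?_, ?_⟩
  · intro i j hij
    have hij' : (i : ℕ) ≠ j := fun h => hij (Fin.ext h)
    by_cases hi : (i : ℕ) < n - 1 <;> by_cases hj : (j : ℕ) < n - 1 <;>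
      simp only [hi, hj, dif_pos, dif_neg, not_false_eq_true]
    · exact hdis _ _ (by simpa using hij')
    · refine Set.disjoint_left.mpr fun x hx hx' => ?_
      have := hle _ x hx
      have := Set.mem_Icc.mp hx'
      omega
    · refine Set.disjoint_left.mpr fun x hx hx' => ?_
      have := hle _ x hx'
      have := Set.mem_Icc.mp hx
      omega
    · omega
  · ext x
    rw [Set.mem_iUnion, Set.mem_Icc]
    constructor
    · rintro ⟨i, hx⟩
      by_cases hi : (i : ℕ) < n - 1 <;>
        simp only [hi, dif_pos, dif_neg, not_false_eq_true] at hx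
      · have := hle _ x hx
        omega
      · have := Set.mem_Icc.mp hx
        omega
    · rintro ⟨h1, h2⟩
      by_cases hxp : x ≤ p
      · have hx : x ∈ ⋃ i, B i := hun ▸ Set.mem_Icc.mpr ⟨h1, hxp⟩
        obtain ⟨i, hi⟩ := Set.mem_iUnion.mp hx
        exact ⟨⟨i, by omega⟩, by simpa using hi⟩
      · refine ⟨⟨n - 1, by omega⟩, ?_⟩
        simp only [lt_irrefl, dif_neg, not_false_eq_true, Set.mem_Icc]
        omega
  · intro i
    by_cases hi : (i : ℕ) < n - 1 <;> simp only [hi, dif_pos, dif_neg, not_false_eq_true]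
    · exact hBsf _
    · intro a ha b hb hab
      rw [Set.mem_Icc] at ha hb hab
      omega
  · intro i hi x hx y hy hxy
    have hi' : (i : ℕ) < n - 1 := by omega
    simp only [hi', dif_pos] at hx hy
    have := hle _ x hx
    have := hle _ y hy
    omega
end

section
/- Let p, q, n, k be positive integers. If there exist an S-template with width q and n + 1 colors and an S-template with width p and k colors, then there exists an S-template with width pq and n + k colors. -/
namespace STemplate

/-- The position in `{1, …, q}` of the positive integer `x` within its block of length `q`. -/
def pos (q x : ℕ) : ℕ := (x - 1) % q + 1

/-- The number of the block of length `q` containing the positive integer `x`, counted from `1`. -/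
def blk (q x : ℕ) : ℕ := (x - 1) / q + 1

lemma pos_mem {q : ℕ} (hq : 0 < q) (x : ℕ) : pos q x ∈ Set.Icc 1 q :=
  ⟨Nat.le_add_left _ _, Nat.mod_lt _ hq⟩

lemma blk_mem {p q x : ℕ} (hx : x ∈ Set.Icc 1 (p * q)) : blk q x ∈ Set.Icc 1 p := by
  obtain ⟨h1, h2⟩ := hx
  exact ⟨Nat.le_add_left _ _, Nat.div_lt_of_lt_mul (by rw [mul_comm]; omega)⟩

lemma mul_blk_add_pos (q : ℕ) {x : ℕ} (hx : 1 ≤ x) : q * blk q x + pos q x = x + q := by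
  have := Nat.div_add_mod (x - 1) q
  unfold blk pos
  rw [mul_add]
  omega

/-- If `z = x + y - q * c`, then either the positions add up without a carry, or there is a carry
and the block numbers (counted from `1`) satisfy `blk z = blk x + blk y - c`. -/
lemma pos_blk_add {q x y z c : ℕ} (hq : 0 < q) (hx : 1 ≤ x) (hy : 1 ≤ y) (hz : 1 ≤ z)
    (h : z + q * c = x + y) :
    pos q z = pos q x + pos q y ∨
      (pos q z + q = pos q x + pos q y ∧ blk q z + c = blk q x + blk q y) := by
  have ex := mul_blk_add_pos q hx
  have ey := mul_blk_add_pos q hy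
  have ez := mul_blk_add_pos q hz
  obtain ⟨x1, x2⟩ := pos_mem hq x
  obtain ⟨y1, y2⟩ := pos_mem hq y
  obtain ⟨z1, z2⟩ := pos_mem hq z
  have key : q * (blk q z + c + 1) + pos q z = q * (blk q x + blk q y) + (pos q x + pos q y) := by
    linarith
  generalize blk q x + blk q y = b at *
  generalize blk q z + c = a at *
  rcases lt_trichotomy a b with hab | rfl | hab
  · obtain rfl | hlt : b = a + 1 ∨ a + 2 ≤ b := by omega
    · left; omega
    · have := Nat.mul_le_mul_left q hlt
      rw [mul_add] at this key
      omega
  · right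
    rw [mul_add] at key
    exact ⟨by omega, rfl⟩
  · have := Nat.mul_le_mul_left q (Nat.succ_le_of_lt hab)
    rw [Nat.succ_eq_add_one, mul_add] at this
    rw [mul_add] at key
    omega

/-- The product coloring: the first `n` colors are read off from the position, and the special
positions are colored by `B` according to their block. -/
def prod (p q : ℕ) {n k : ℕ} (A : Fin (n + 1) → Set ℕ) (B : Fin k → Set ℕ) :
    Fin (n + k) → Set ℕ :=
  Fin.addCases (fun i => {x | x ∈ Set.Icc 1 (p * q) ∧ pos q x ∈ A i.castSucc})
    (fun j => {x | x ∈ Set.Icc 1 (p * q) ∧ pos q x ∈ A (Fin.last n) ∧ blk q x ∈ B j})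

variable {p q n k : ℕ} {A : Fin (n + 1) → Set ℕ} {B : Fin k → Set ℕ}

lemma mem_prod_castAdd {i : Fin n} {x : ℕ} : x ∈ prod p q A B (Fin.castAdd k i) ↔
    x ∈ Set.Icc 1 (p * q) ∧ pos q x ∈ A i.castSucc := by
  simp [prod]

lemma mem_prod_natAdd {j : Fin k} {x : ℕ} : x ∈ prod p q A B (Fin.natAdd n j) ↔
    x ∈ Set.Icc 1 (p * q) ∧ pos q x ∈ A (Fin.last n) ∧ blk q x ∈ B j := by
  simp [prod]

lemma eq_of_mem {m w : ℕ} {D : Fin m → Set ℕ} (hD : IsPartition w D) {i j : Fin m} {x : ℕ}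
    (hi : x ∈ D i) (hj : x ∈ D j) : i = j := by
  by_contra h
  exact Set.disjoint_left.1 (hD.1 i j h) hi hj

lemma exists_mem {m w : ℕ} {D : Fin m → Set ℕ} (hD : IsPartition w D) {x : ℕ}
    (hx : x ∈ Set.Icc 1 w) : ∃ i, x ∈ D i := by
  rwa [← hD.2, Set.mem_iUnion] at hx

lemma isPartition_prod (hq : 0 < q) (hA : IsPartition q A) (hB : IsPartition p B) :
    IsPartition (p * q) (prod p q A B) := by
  constructor
  · intro i j hij
    refine Set.disjoint_left.2 fun x hi hj => hij ?_
    induction i using Fin.addCases <;> induction j using Fin.addCases <;>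
      simp only [mem_prod_castAdd, mem_prod_natAdd] at hi hj
    · rw [Fin.castSucc_injective n (eq_of_mem hA hi.2 hj.2)]
    · exact absurd (eq_of_mem hA hi.2 hj.2.1) (Fin.castSucc_lt_last _).ne
    · exact absurd (eq_of_mem hA hj.2 hi.2.1) (Fin.castSucc_lt_last _).ne
    · rw [eq_of_mem hB hi.2.2 hj.2.2]
  · ext x
    rw [Set.mem_iUnion]
    constructor
    · rintro ⟨i, hi⟩
      induction i using Fin.addCases
      · exact (mem_prod_castAdd.1 hi).1
      · exact (mem_prod_natAdd.1 hi).1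
    · intro hx
      obtain ⟨i, hi⟩ := exists_mem hA (pos_mem hq x)
      induction i using Fin.lastCases with
      | last =>
        obtain ⟨j, hj⟩ := exists_mem hB (blk_mem hx)
        exact ⟨_, mem_prod_natAdd.2 ⟨hx, hi, hj⟩⟩
      | cast i => exact ⟨_, mem_prod_castAdd.2 ⟨hx, hi⟩⟩

/-- The first `n` colors are sum-free modulo `q`. -/
lemma castAdd_free (hq : 0 < q) (hA : IsSTemplate q A) {i : Fin n} {x y z c : ℕ}
    (hx : x ∈ prod p q A B (Fin.castAdd k i)) (hy : y ∈ prod p q A B (Fin.castAdd k i))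
    (hz : z ∈ prod p q A B (Fin.castAdd k i)) (h : z + q * c = x + y) : False := by
  rw [mem_prod_castAdd] at hx hy hz
  rcases pos_blk_add hq hx.1.1 hy.1.1 hz.1.1 h with e | ⟨e, -⟩
  · exact hA.2.1 _ _ hx.2 _ hy.2 (e ▸ hz.2)
  · have z1 := (pos_mem hq z).1
    refine hA.2.2 i.castSucc (by have := i.2; simp only [Fin.val_castSucc]; omega)
      _ hx.2 _ hy.2 (by omega) ?_
    rw [← e, Nat.add_sub_cancel]
    exact hz.2

/-- A relation `z = x + y - q * c` inside one of the last `k` colors descends to block numbers. -/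
lemma natAdd_blk (hq : 0 < q) (hA : IsSTemplate q A) {j : Fin k} {x y z c : ℕ}
    (hx : x ∈ prod p q A B (Fin.natAdd n j)) (hy : y ∈ prod p q A B (Fin.natAdd n j))
    (hz : z ∈ prod p q A B (Fin.natAdd n j)) (h : z + q * c = x + y) :
    blk q z + c = blk q x + blk q y := by
  rw [mem_prod_natAdd] at hx hy hz
  rcases pos_blk_add hq hx.1.1 hy.1.1 hz.1.1 h with e | ⟨-, e⟩
  · exact absurd (e ▸ hz.2.1) (hA.2.1 _ _ hx.2.1 _ hy.2.1)
  · exact e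

end STemplate

open STemplate in
/-- Theorem 2.6: an S-template with width `q` and `n+1` colors and an
S-template with width `p` and `k` colors combine into an S-template with
width `p*q` and `n+k` colors. -/
theorem stemplate_product (p q n k : ℕ) (hp : 0 < p) (hq : 0 < q)
    (hn : 0 < n) (hk : 0 < k)
    (A : Fin (n + 1) → Set ℕ) (hA : IsSTemplate q A)
    (B : Fin k → Set ℕ) (hB : IsSTemplate p B) :
    ∃ C : Fin (n + k) → Set ℕ, IsSTemplate (p * q) C := by
  refine ⟨prod p q A B, isPartition_prod hq hA.1 hB.1, ?_, ?_⟩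
  · intro i x hx y hy hz
    induction i using Fin.addCases with
    | left i => exact castAdd_free (c := 0) hq hA hx hy hz (by simp)
    | right j =>
      have e := natAdd_blk (c := 0) hq hA hx hy hz (by simp)
      rw [mem_prod_natAdd] at hx hy hz
      exact hB.2.1 j _ hx.2.2 _ hy.2.2 (e ▸ hz.2.2)
  · intro i hi x hx y hy hlt hz
    have h : x + y - p * q + q * p = x + y := by rw [mul_comm q p]; omega
    induction i using Fin.addCases with
    | left i => exact castAdd_free hq hA hx hy hz h
    | right j =>
      have e := natAdd_blk hq hA hx hy hz h
      rw [mem_prod_natAdd] at hx hy hz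
      have z1 := (blk_mem hz.1).1
      refine hB.2.2 j (by simp only [Fin.val_natAdd] at hi; omega) _ hx.2.2 _ hy.2.2 (by omega) ?_
      rw [← e, Nat.add_sub_cancel]
      exact hz.2.2
end

section
/- Let n and p be positive integers. If there exists a partition of {1, …, p} into n sum-free subsets, then there exists a partition of {1, …, 111p + 43} into n + 4 sum-free subsets. (In particular, the Schur numbers satisfy S(n + 4) ≥ 111·S(n) + 43.) -/
/-- The quotient `k` in `x = q * k + r` with `1 ≤ r ≤ q` (for `x` positive). -/
def quo (q x : ℕ) : ℕ := (x - 1) / q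

/-- The remainder `r` in `x = q * k + r` with `1 ≤ r ≤ q`: it takes the value `q`, not `0`, at the
multiples of `q`. -/
def rem (q x : ℕ) : ℕ := (x - 1) % q + 1

lemma mul_quo_add_rem {q x : ℕ} (hx : 0 < x) : q * quo q x + rem q x = x := by
  have := Nat.div_add_mod (x - 1) q
  unfold quo rem
  omega

lemma rem_pos (q x : ℕ) : 0 < rem q x := Nat.succ_pos _

lemma rem_le {q : ℕ} (hq : 0 < q) (x : ℕ) : rem q x ≤ q := Nat.mod_lt _ hq

lemma quo_rem_eq {q k r : ℕ} (hr : 0 < r) (hrq : r ≤ q) :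
    quo q (q * k + r) = k ∧ rem q (q * k + r) = r := by
  have h : q * k + r - 1 = (r - 1) + q * k := by omega
  have hlt : r - 1 < q := by omega
  unfold quo rem
  rw [h, Nat.add_mul_div_left _ _ (by omega), Nat.add_mul_mod_self_left, Nat.div_eq_of_lt hlt,
    Nat.mod_eq_of_lt hlt]
  omega

/-- Quotient and remainder of a sum, according to whether the remainders produce a carry. -/
lemma quo_rem_add {q x y : ℕ} (hq : 0 < q) (hx : 0 < x) (hy : 0 < y) :
    (rem q x + rem q y ≤ q ∧ quo q (x + y) = quo q x + quo q y ∧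
      rem q (x + y) = rem q x + rem q y) ∨
    (q < rem q x + rem q y ∧ quo q (x + y) = quo q x + quo q y + 1 ∧
      rem q (x + y) = rem q x + rem q y - q) := by
  have ex := mul_quo_add_rem (q := q) hx
  have ey := mul_quo_add_rem (q := q) hy
  have px := rem_pos q x
  have lx := rem_le hq x
  have ly := rem_le hq y
  rcases le_or_gt (rem q x + rem q y) q with h | h
  · left
    have e : x + y = q * (quo q x + quo q y) + (rem q x + rem q y) := by
      rw [mul_add]; omega
    have := quo_rem_eq (k := quo q x + quo q y) (by omega : 0 < rem q x + rem q y) h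
    rw [← e] at this
    exact ⟨h, this⟩
  · right
    have e : x + y = q * (quo q x + quo q y + 1) + (rem q x + rem q y - q) := by
      rw [mul_add, mul_add, mul_one]; omega
    have := quo_rem_eq (k := quo q x + quo q y + 1)
      (by omega : 0 < rem q x + rem q y - q) (by omega : rem q x + rem q y - q ≤ q)
    rw [← e] at this
    exact ⟨h, this⟩

/-- Inflation of a sum-free partition `A` of `{1, …, p}` along an S-template `T` of width `q` whose
special color only contains numbers larger than `m`. -/
theorem exists_partition_of_isSTemplate {n p d q m : ℕ} {A : Fin n → Set ℕ}
    {T : Fin (d + 1) → Set ℕ} (hq : 0 < q) (hT : IsSTemplate q T)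
    (hm : ∀ x ∈ T (Fin.last d), m < x) (hA : IsPartition p A) (hAsf : ∀ i, SumFree (A i)) :
    ∃ B : Fin (n + d) → Set ℕ, IsPartition (q * p + m) B ∧ ∀ i, SumFree (B i) := by
  obtain ⟨⟨hTd, hTu⟩, hTsf, hTmod⟩ := hT
  obtain ⟨hAd, hAu⟩ := hA
  let S : Fin n → Set ℕ := fun i =>
    {x | x ∈ Set.Icc 1 (q * p + m) ∧ rem q x ∈ T (Fin.last d) ∧ quo q x + 1 ∈ A i}
  let O : Fin d → Set ℕ := fun j =>
    {x | x ∈ Set.Icc 1 (q * p + m) ∧ rem q x ∈ T j.castSucc}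
  refine ⟨Fin.append S O, ⟨?_, ?_⟩, ?_⟩
  · have hSO : ∀ i j, Disjoint (S i) (O j) := fun i j =>
      Set.disjoint_left.2 fun x hx hx' =>
        Set.disjoint_left.1 (hTd _ _ (Fin.castSucc_lt_last j).ne') hx.2.1 hx'.2
    intro i j
    induction i using Fin.addCases with
    | left i =>
      induction j using Fin.addCases with
      | left j =>
        intro hij
        simp only [Fin.append_left]
        exact Set.disjoint_left.2 fun x hx hx' => Set.disjoint_left.1
          (hAd i j fun h => hij (by rw [h])) hx.2.2 hx'.2.2
      | right j => simpa only [Fin.append_left, Fin.append_right] using fun _ => hSO i j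
    | right i =>
      induction j using Fin.addCases with
      | left j => simpa only [Fin.append_left, Fin.append_right] using fun _ => (hSO j i).symm
      | right j =>
        intro hij
        simp only [Fin.append_right]
        refine Set.disjoint_left.2 fun x hx hx' => Set.disjoint_left.1
          (hTd i.castSucc j.castSucc fun h => hij ?_) hx.2 hx'.2
        rw [Fin.castSucc_injective _ h]
  · ext x
    simp only [Set.mem_iUnion]
    constructor
    · rintro ⟨i, hi⟩
      induction i using Fin.addCases with
      | left i => rw [Fin.append_left] at hi; exact hi.1
      | right i => rw [Fin.append_right] at hi; exact hi.1
    · intro hx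
      have hr : rem q x ∈ ⋃ i, T i := by
        rw [hTu]; exact ⟨rem_pos q x, rem_le hq x⟩
      obtain ⟨i, hi⟩ := Set.mem_iUnion.1 hr
      induction i using Fin.lastCases with
      | cast j => exact ⟨Fin.natAdd n j, by rw [Fin.append_right]; exact ⟨hx, hi⟩⟩
      | last =>
        -- A special remainder exceeds `m`, which leaves room only for quotients below `p`.
        have hk : quo q x < p := by
          have e := mul_quo_add_rem (q := q) hx.1
          have h1 := hm _ hi
          have h2 := hx.2
          exact Nat.lt_of_mul_lt_mul_left (a := q) (by omega)
        have hk' : quo q x + 1 ∈ ⋃ i, A i := by rw [hAu]; exact ⟨by omega, by omega⟩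
        obtain ⟨i, hi'⟩ := Set.mem_iUnion.1 hk'
        exact ⟨Fin.castAdd d i, by rw [Fin.append_left]; exact ⟨hx, hi, hi'⟩⟩
  · intro i
    induction i using Fin.addCases with
    | left i =>
      rw [Fin.append_left]
      rintro x ⟨hx, hxr, hxk⟩ y ⟨hy, hyr, hyk⟩ ⟨-, hr, hk⟩
      rcases quo_rem_add hq hx.1 hy.1 with ⟨-, -, er⟩ | ⟨-, ek, -⟩
      · exact hTsf _ _ hxr _ hyr (er ▸ hr)
      · refine hAsf i _ hxk _ hyk ?_
        rw [ek] at hk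
        convert hk using 1
        omega
    | right j =>
      rw [Fin.append_right]
      rintro x ⟨hx, hxr⟩ y ⟨hy, hyr⟩ ⟨-, hr⟩
      rcases quo_rem_add hq hx.1 hy.1 with ⟨-, -, er⟩ | ⟨hc, -, er⟩
      · exact hTsf _ _ hxr _ hyr (er ▸ hr)
      · have hj : (j.castSucc : ℕ) + 1 ≠ d + 1 := by
          have := j.isLt
          rw [Fin.val_castSucc]
          omega
        exact hTmod _ hj _ hxr _ hyr hc (er ▸ hr)

/-- The color classes of an S-template of width `111` with five colors; the special one is the last.
Each class is invariant under `x ↦ 44 - x` modulo `111`. -/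
def blocks : Fin 5 → List ℕ :=
  ![
    [1, 5, 8, 12, 14, 21, 23, 30, 32, 36, 39, 43, 45, 52, 54, 101, 103, 110],
    [2, 6, 7, 10, 15, 18, 26, 29, 34, 37, 38, 42, 46, 51, 104, 109],
    [3, 4, 9, 11, 17, 19, 25, 27, 33, 35, 40, 41, 47, 48, 55, 100, 107, 108],
    [13, 16, 20, 22, 24, 28, 31, 49, 58, 61, 67, 88, 94, 97, 106],
    [44, 50, 53, 56, 57, 59, 60, 62, 63, 64, 65, 66, 68, 69, 70, 71, 72, 73, 74, 75, 76,
     77, 78, 79, 80, 81, 82, 83, 84, 85, 86, 87, 89, 90, 91, 92, 93, 95, 96, 98, 99, 102,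
     105, 111]]

/-- The classes `blocks` form an S-template whose special color starts above `43`. -/
theorem blocks_isSTemplate :
    IsSTemplate 111 (fun i : Fin (4 + 1) => {x | x ∈ blocks i}) ∧
      ∀ x ∈ {x | x ∈ blocks (Fin.last 4)}, 43 < x := by
  have hdisj : ∀ i j, i ≠ j → ∀ x ∈ blocks i, x ∉ blocks j := by decide +kernel
  have hle : ∀ i, ∀ x ∈ blocks i, 1 ≤ x ∧ x ≤ 111 := by decide +kernel
  have hcov : ∀ x < 112, 1 ≤ x → ∃ i, x ∈ blocks i := by decide +kernel
  have hsf : ∀ i, ∀ x ∈ blocks i, ∀ y ∈ blocks i, x + y ∉ blocks i := by decide +kernel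
  have hmod : ∀ i : Fin 5, (i : ℕ) + 1 ≠ 5 → ∀ x ∈ blocks i, ∀ y ∈ blocks i,
      111 < x + y → x + y - 111 ∉ blocks i := by decide +kernel
  have hlast : ∀ x ∈ blocks (Fin.last 4), 43 < x := by decide +kernel
  refine ⟨⟨⟨fun i j hij => Set.disjoint_left.2 (hdisj i j hij), ?_⟩, hsf, hmod⟩, hlast⟩
  ext x
  simp only [Set.mem_iUnion]
  exact ⟨fun ⟨i, hi⟩ => hle i x hi, fun hx => hcov x (Nat.lt_succ_of_le hx.2) hx.1⟩

/-- Inequality `S(n + 4) ≥ 111 · S(n) + 43`: a sum-free `n`-partition of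
`{1, …, p}` yields a sum-free `(n + 4)`-partition of `{1, …, 111p + 43}`. -/
theorem schur_add_four (n p : ℕ) (hn : 0 < n) (hp : 0 < p)
    (A : Fin n → Set ℕ) (hA : IsPartition p A) (hAsf : ∀ i, SumFree (A i)) :
    ∃ B : Fin (n + 4) → Set ℕ,
      IsPartition (111 * p + 43) B ∧ ∀ i, SumFree (B i) := by
  obtain ⟨hq, hm⟩ := blocks_isSTemplate
  exact exists_partition_of_isSTemplate (by norm_num) hq hm hA hAsf
end

section
/- Let p, q, n, k be positive integers. If there exist a partition of {1, …, q} into n weakly sum-free subsets and a partition of {1, …, p} into k sum-free subsets, then there exists a partition of {1, …, p(q + ⌈q/2⌉ + 1) + q} into n + k weakly sum-free subsets. -/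
/-- Two quotients by `a` of the same number, with remainders below `2 * a`, differ by at most one. -/
lemma carry_cases {a s t m l : ℕ} (h : a * s + m = a * t + l) (hm : m < 2 * a) (hl : l < 2 * a) :
    (t = s ∧ m = l) ∨ (t = s + 1 ∧ m = a + l) ∨ (s = t + 1 ∧ l = a + m) := by
  rcases lt_trichotomy s t with hst | rfl | hst
  · obtain ⟨d, rfl⟩ := Nat.exists_eq_add_of_lt hst
    have hd : d = 0 := by
      by_contra hd
      nlinarith [Nat.mul_le_mul_left a (Nat.one_le_iff_ne_zero.mpr hd)]
    subst hd
    right; left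
    exact ⟨rfl, by nlinarith⟩
  · left
    exact ⟨rfl, by omega⟩
  · obtain ⟨d, rfl⟩ := Nat.exists_eq_add_of_lt hst
    have hd : d = 0 := by
      by_contra hd
      nlinarith [Nat.mul_le_mul_left a (Nat.one_le_iff_ne_zero.mpr hd)]
    subst hd
    right; right
    exact ⟨rfl, by nlinarith⟩

/-- The numbers `a * u + v` in `{1, …, N}`, where `a = q + r + 1` and `-r ≤ v ≤ q`, with `u = 0` or
`v > q - r`, whose residue `v` lies in `S`. The variable `w` is `v + r`. -/
def residueClass (q r N : ℕ) (S : Set ℕ) : Set ℕ :=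
  {x | x ∈ Set.Icc 1 N ∧ ∃ u w, x + r = (q + r + 1) * u + w ∧ w < q + r + 1 ∧
    (u = 0 ∨ q < w) ∧ w - r ∈ S}

/-- The numbers `a * u + v` in `{1, …, N}`, where `a = q + r + 1`, `u ≥ 1` and `-r ≤ v ≤ q - r`,
whose quotient `u` lies in `S`. The variable `w` is `v + r`. -/
def quotientClass (q r N : ℕ) (S : Set ℕ) : Set ℕ :=
  {x | x ∈ Set.Icc 1 N ∧ ∃ u w, x + r = (q + r + 1) * u + w ∧ w ≤ q ∧ 1 ≤ u ∧ u ∈ S}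

lemma weaklySumFree_residueClass {q r N : ℕ} (hr1 : q ≤ 2 * r) (hr2 : 2 * r ≤ q + 1)
    {S : Set ℕ} (hS : WeaklySumFree S) : WeaklySumFree (residueClass q r N S) := by
  rintro x ⟨⟨hx1, -⟩, u₁, w₁, e₁, l₁, c₁, m₁⟩ y ⟨⟨hy1, -⟩, u₂, w₂, e₂, l₂, c₂, m₂⟩ hxy
    ⟨-, u₃, w₃, e₃, l₃, c₃, m₃⟩
  have hw : ∀ {x u w}, 1 ≤ x → x + r = (q + r + 1) * u + w → (u = 0 ∨ q < w) → r < w := by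
    rintro x u w hx e (rfl | h)
    · rw [Nat.mul_zero] at e
      omega
    · omega
  have h₁ := hw hx1 e₁ c₁
  have h₂ := hw hy1 e₂ c₂
  have h₃ := hw (by omega) e₃ c₃
  have key : (q + r + 1) * (u₁ + u₂) + (w₁ + w₂) = (q + r + 1) * u₃ + (w₃ + r) := by
    rw [Nat.mul_add]
    omega
  rcases carry_cases key (by omega) (by omega) with ⟨-, h⟩ | ⟨hu, h⟩ | ⟨-, h⟩
  · by_cases hww : w₁ = w₂
    · subst hww
      have hle : w₁ ≤ q := by omega
      have z₁ : u₁ = 0 := by omega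
      have z₂ : u₂ = 0 := by omega
      subst z₁ z₂
      omega
    · refine hS _ m₁ _ m₂ (by omega) ?_
      rwa [show w₁ - r + (w₂ - r) = w₃ - r by omega]
  · omega
  · omega

lemma weaklySumFree_quotientClass {q r N : ℕ} (hr1 : q ≤ 2 * r)
    {S : Set ℕ} (hS : SumFree S) : WeaklySumFree (quotientClass q r N S) := by
  rintro x ⟨-, u₁, w₁, e₁, l₁, -, m₁⟩ y ⟨-, u₂, w₂, e₂, l₂, -, m₂⟩ -
    ⟨-, u₃, w₃, e₃, l₃, -, m₃⟩
  have key : (q + r + 1) * (u₁ + u₂) + (w₁ + w₂) = (q + r + 1) * u₃ + (w₃ + r) := by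
    rw [Nat.mul_add]
    omega
  rcases carry_cases key (by omega) (by omega) with ⟨h, -⟩ | ⟨-, h⟩ | ⟨-, h⟩
  · exact hS _ m₁ _ m₂ (h ▸ m₃)
  · omega
  · omega

lemma disjoint_residueClass {q r N : ℕ} {S T : Set ℕ} (h : Disjoint S T) :
    Disjoint (residueClass q r N S) (residueClass q r N T) := by
  rw [Set.disjoint_left] at h ⊢
  rintro x ⟨-, u₁, w₁, e₁, l₁, -, m₁⟩ ⟨-, u₂, w₂, e₂, l₂, -, m₂⟩
  have hw : w₁ = w₂ := by
    rcases carry_cases (e₁.symm.trans e₂) (by omega) (by omega) with h | h | h <;> omega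
  exact h m₁ (hw ▸ m₂)

lemma disjoint_quotientClass {q r N : ℕ} {S T : Set ℕ} (h : Disjoint S T) :
    Disjoint (quotientClass q r N S) (quotientClass q r N T) := by
  rw [Set.disjoint_left] at h ⊢
  rintro x ⟨-, u₁, w₁, e₁, l₁, -, m₁⟩ ⟨-, u₂, w₂, e₂, l₂, -, m₂⟩
  have hu : u₁ = u₂ := by
    rcases carry_cases (e₁.symm.trans e₂) (by omega) (by omega) with h | h | h <;> omega
  exact h m₁ (hu ▸ m₂)

lemma disjoint_residueClass_quotientClass {q r N : ℕ} {S T : Set ℕ} :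
    Disjoint (residueClass q r N S) (quotientClass q r N T) := by
  rw [Set.disjoint_left]
  rintro x ⟨-, u₁, w₁, e₁, l₁, c₁, -⟩ ⟨-, u₂, w₂, e₂, l₂, c₂, -⟩
  rcases carry_cases (e₁.symm.trans e₂) (by omega) (by omega) with h | h | h <;> omega

/-- Theorem 3.1: a weakly sum-free `n`-partition of `{1, …, q}` and a
sum-free `k`-partition of `{1, …, p}` yield a weakly sum-free
`(n+k)`-partition of `{1, …, p(q + ⌈q/2⌉ + 1) + q}`. -/
theorem weak_schur_extension (p q n k : ℕ) (hp : 0 < p) (hq : 0 < q)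
    (hn : 0 < n) (hk : 0 < k)
    (A : Fin n → Set ℕ) (hA : IsPartition q A)
    (hAwsf : ∀ i, WeaklySumFree (A i))
    (B : Fin k → Set ℕ) (hB : IsPartition p B) (hBsf : ∀ i, SumFree (B i)) :
    ∃ C : Fin (n + k) → Set ℕ,
      IsPartition (p * (q + (q + 1) / 2 + 1) + q) C ∧
      ∀ i, WeaklySumFree (C i) := by
  obtain ⟨hAd, hAu⟩ := hA
  obtain ⟨hBd, hBu⟩ := hB
  obtain ⟨r, hr⟩ : ∃ r, r = (q + 1) / 2 := ⟨_, rfl⟩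
  rw [← hr]
  obtain ⟨N, hN⟩ : ∃ N, N = p * (q + r + 1) + q := ⟨_, rfl⟩
  rw [← hN]
  refine ⟨Fin.append (fun i => residueClass q r N (A i)) (fun j => quotientClass q r N (B j)),
    ⟨?_, ?_⟩, ?_⟩
  · intro i j
    refine Fin.addCases (fun i => ?_) (fun i => ?_) i <;>
      refine Fin.addCases (fun j => ?_) (fun j => ?_) j <;>
      intro hij <;>
      simp only [Fin.append_left, Fin.append_right]
    · exact disjoint_residueClass (hAd i j fun h => hij (by rw [h]))
    · exact disjoint_residueClass_quotientClass
    · exact disjoint_residueClass_quotientClass.symm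
    · exact disjoint_quotientClass (hBd i j fun h => hij (by rw [h]))
  · apply Set.Subset.antisymm
    · refine Set.iUnion_subset fun i => ?_
      refine Fin.addCases (fun i => ?_) (fun i => ?_) i <;>
        simp only [Fin.append_left, Fin.append_right] <;>
        exact fun x hx => hx.1
    · intro x hx
      rw [Set.mem_iUnion]
      obtain ⟨u, hu⟩ : ∃ u, u = (x + r) / (q + r + 1) := ⟨_, rfl⟩
      obtain ⟨w, hw⟩ : ∃ w, w = (x + r) % (q + r + 1) := ⟨_, rfl⟩
      have e : x + r = (q + r + 1) * u + w := by rw [hu, hw, Nat.div_add_mod]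
      have l : w < q + r + 1 := hw ▸ Nat.mod_lt _ (by omega)
      have hx1 := hx.1
      have hx2 := hx.2
      by_cases c : u = 0 ∨ q < w
      · have hv : w - r ∈ ⋃ i, A i := by
          rw [hAu, Set.mem_Icc]
          rcases c with rfl | c
          · rw [Nat.mul_zero] at e
            omega
          · omega
        obtain ⟨i, hi⟩ := Set.mem_iUnion.mp hv
        refine ⟨Fin.castAdd k i, ?_⟩
        rw [Fin.append_left]
        exact ⟨hx, u, w, e, l, c, hi⟩
      · have hup : u ≤ p := by
          by_contra hlt
          nlinarith [Nat.mul_le_mul_left (q + r + 1) (Nat.lt_of_not_le hlt)]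
        have hv : u ∈ ⋃ j, B j := by
          rw [hBu, Set.mem_Icc]
          omega
        obtain ⟨j, hj⟩ := Set.mem_iUnion.mp hv
        refine ⟨Fin.natAdd n j, ?_⟩
        rw [Fin.append_right]
        exact ⟨hx, u, w, e, by omega, by omega, hj⟩
  · intro i
    refine Fin.addCases (fun i => ?_) (fun i => ?_) i <;>
      simp only [Fin.append_left, Fin.append_right]
    · exact weaklySumFree_residueClass (by omega) (by omega) (hAwsf i)
    · exact weaklySumFree_quotientClass (by omega) (hBsf i)
end
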